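/- The product-measure map for the Giry monad is measurable: for measurable spaces X and Y, the map sending a pair (μ, ν) of probability measures on X and Y respectively to the product measure μ ⊗ ν on X × Y (with the product σ-algebra) is measurable, where each space of probability measures carries the σ-algebra generated by the evaluation maps μ ↦ μ(S) for S measurable. -/

import Mathlib

open MeasureTheory

/-- The space of probability measures carries the σ-algebra generated by the evaluation
maps `μ ↦ μ S` for measurable `S`: it is the subtype σ-algebra induced by the
measurable-space structure on `Measure` underlying the Giry monad. -/
instance {Ω : Type*} [MeasurableSpace Ω] : MeasurableSpace (ProbabilityMeasure Ω) :=
  inferInstanceAs (MeasurableSpace {μ : Measure Ω // IsProbabilityMeasure μ})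

theorem measurable_probabilityMeasure_eval {Ω : Type*} [MeasurableSpace Ω] {s : Set Ω}
    (hs : MeasurableSet s) : Measurable fun μ : ProbabilityMeasure Ω => (μ : Measure Ω) s :=
  (Measure.measurable_coe hs).comp measurable_subtype_coe

/-- The product-measure map for the Giry monad is measurable: for measurable spaces `X`
and `Y`, the map sending a pair `(μ, ν)` of probability measures to the product measure
`μ ⊗ ν` on `X × Y` (with the product σ-algebra) is measurable. -/
theorem measurable_prod_of_probabilityMeasures
    {X Y : Type*} [MeasurableSpace X] [MeasurableSpace Y] :
    Measurable (fun μν : ProbabilityMeasure X × ProbabilityMeasure Y =>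
      ((μν.1 : Measure X).prod (μν.2 : Measure Y))) := by
  -- By the π-λ theorem it suffices to evaluate on measurable rectangles, where the
  -- product measure is the product of two evaluations.
  refine Measurable.measure_of_isPiSystem_of_isProbabilityMeasure
    generateFrom_prod.symm isPiSystem_prod ?_
  rintro _ ⟨s, hs, t, ht, rfl⟩
  simp_rw [Measure.prod_prod]
  exact ((measurable_probabilityMeasure_eval hs).comp measurable_fst).mul
    ((measurable_probabilityMeasure_eval ht).comp measurable_snd)
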